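/- For every real number α with 0 < α < 1, there exists a one-sided infinite word x ∈ {a,b}^ℕ with p_x(n) = O(n^{2+α}) and cost c(x) ≥ α; equivalently, for every real β < α, every positive integer k, and every language S ⊆ {a,b}* with p_S(n) = O(n^β), one has Fac(x) ⊄ S^k. -/

import Mathlib

open scoped ENNReal Pointwise

universe u

variable {A : Type u}

/-- The factor of `x` of length `n` starting at position `i`. -/
def wordSeg (x : ℕ → A) (i n : ℕ) : List A := (List.range n).map fun j => x (i + j)

/-- The set of finite factors of a one-sided infinite word (including the empty word). -/
def Fac (x : ℕ → A) : Set (List A) := {u | ∃ i n, u = wordSeg x i n}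

/-- The factor of a two-sided word `x` of length `n` starting at position `i`. -/
def wordSegZ (x : ℤ → A) (i : ℤ) (n : ℕ) : List A := (List.range n).map fun j => x (i + j)

/-- The set of finite factors of a two-sided infinite word (including the empty word). -/
def FacZ (x : ℤ → A) : Set (List A) := {u | ∃ (i : ℤ) (n : ℕ), u = wordSegZ x i n}

/-- The complexity of a language: the number of words of length `n` in it. -/
noncomputable def complexity (L : Set (List A)) (n : ℕ) : ℕ :=
  {u ∈ L | u.length = n}.ncard

/-- The accumulative complexity `p*_L(n) = Σ_{i=0}^{n} p_L(i)`. -/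
noncomputable def accComplexity (L : Set (List A)) (n : ℕ) : ℕ :=
  ∑ i ∈ Finset.range (n + 1), complexity L i

/-- Concatenation (product) of two languages. -/
def prodL (S T : Set (List A)) : Set (List A) := {w | ∃ s ∈ S, ∃ t ∈ T, w = s ++ t}

/-- `powL S k` = `S^k`, the set of concatenations of `k` elements of `S`. -/
def powL (S : Set (List A)) : ℕ → Set (List A)
  | 0 => {([] : List A)}
  | k + 1 => prodL (powL S k) S

/-- `f(n) = O(n^α)`. -/
def PolyBound (f : ℕ → ℕ) (α : ℝ) : Prop :=
  ∃ C : ℝ, ∀ n : ℕ, 1 ≤ n → (f n : ℝ) ≤ C * (n : ℝ) ^ α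

/-- The `α`-dimension `d_α(L)`: infimum of the integers `k ≥ 1` such that `L ⊆ S^k`
for some language `S` with `p_S(n) = O(n^α)`, with `inf ∅ = ⊤`. -/
noncomputable def polyDim (α : ℝ) (L : Set (List A)) : ℕ∞ :=
  sInf {k : ℕ∞ | ∃ m : ℕ, k = m ∧ 1 ≤ m ∧
    ∃ S : Set (List A), PolyBound (complexity S) α ∧ L ⊆ powL S m}

/-- The accumulative `α`-dimension `d*_α(L)`. -/
noncomputable def polyDimStar (α : ℝ) (L : Set (List A)) : ℕ∞ :=
  sInf {k : ℕ∞ | ∃ m : ℕ, k = m ∧ 1 ≤ m ∧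
    ∃ S : Set (List A), PolyBound (accComplexity S) α ∧ L ⊆ powL S m}

/-- The cost `c(L)`: infimum of the `α ≥ 0` with `d_α(L) < +∞`, with `inf ∅ = ⊤`. -/
noncomputable def cost (L : Set (List A)) : ℝ≥0∞ :=
  sInf {a : ℝ≥0∞ | ∃ α : ℝ, 0 ≤ α ∧ a = ENNReal.ofReal α ∧ polyDim α L ≠ ⊤}

/-- A one-sided word is ultimately periodic if it is of the form `u v v v ⋯`. -/
def UltimatelyPeriodic (x : ℕ → A) : Prop :=
  ∃ N p : ℕ, 0 < p ∧ ∀ n : ℕ, N ≤ n → x (n + p) = x n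

/-- A two-sided word is eventually periodic if it is periodic far enough to the right
and far enough to the left. -/
def EventuallyPeriodicZ (x : ℤ → A) : Prop :=
  (∃ p : ℕ, 0 < p ∧ ∃ N : ℤ, ∀ n : ℤ, N ≤ n → x (n + p) = x n) ∧
  (∃ p : ℕ, 0 < p ∧ ∃ N : ℤ, ∀ n : ℤ, n ≤ N → x (n - p) = x n)

/-- A one-sided word is recurrent if each of its factors occurs infinitely often. -/
def Recurrent (x : ℕ → A) : Prop :=
  ∀ u ∈ Fac x, ∀ N : ℕ, ∃ i : ℕ, N ≤ i ∧ u = wordSeg x i u.length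

/-- `u` is a right special factor for the language `F`. -/
def RightSpecial (F : Set (List A)) (u : List A) : Prop :=
  u ∈ F ∧ ∃ a b : A, a ≠ b ∧ u ++ [a] ∈ F ∧ u ++ [b] ∈ F

/-- `M` is a `D`-marker set for a word with factor set `F`: every factor of length
at least `D n` contains a factor of length `n` belonging to `M`. -/
def MarkerSet (D : ℕ) (M F : Set (List A)) : Prop :=
  ∀ n : ℕ, 1 ≤ n → ∀ u ∈ F, D * n ≤ u.length →
    ∃ v ∈ M, v.length = n ∧ v <:+: u

/-- A language is factorial if it contains all factors of its members. -/
def IsFactorial (S : Set (List A)) : Prop := ∀ u ∈ S, ∀ v : List A, v <:+: u → v ∈ S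

/-- The bound `Σ_{k ∈ I_n ∩ ℕ} p_M(2^k)(1 + 4 p(3n)/2^k)` where
`I_n = (log₂(n/(2D)), log₂(2n)]`, i.e. the sum is over natural `k` with
`n/(2D) < 2^k ≤ 2n`. -/
noncomputable def markerBound (M F : Set (List A)) (D n : ℕ) : ℝ :=
  ∑ k ∈ (Finset.range (2 * n + 2)).filter (fun k => n < 2 * D * 2 ^ k ∧ 2 ^ k ≤ 2 * n),
    (complexity M (2 ^ k) : ℝ) * (1 + 4 * (complexity F (3 * n) : ℝ) / 2 ^ k)

-- The word `u = ∏_{i=1}^{∞} a b^i = a b a b b a b b b ⋯` over `{a,b}`, with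
-- `a = false`, `b = true`: position `n` carries an `a` iff `n = (i-1)(i+2)/2` for some
-- `i ≥ 1`, i.e. iff `2n = m(m+3)` for some `m ≥ 0`.
open Classical in
noncomputable def uWord (n : ℕ) : Bool :=
  if ∃ m : ℕ, 2 * n = m * (m + 3) then false else true

/-!
Stage `j` of the word consists of about `T ^ (1 + α)` periodic blocks, where `T` is the position
at which the stage starts. The period of a block has length proportional to `T` and encodes the
index of the block by the exact positions of a bounded number of letters `b`, one in each slot of
length `2 * T`; an empty slot marks the end of the period. The length of the blocks is `3 * (j + 1)`
periods.

Periodicity keeps the complexity small: a window of length `m ≥ T` in stage `j` is determined by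
its block and by its phase or its distance to the end of the block, which gives
`O(m ^ (1 + α) * m)` words, and windows in later stages contain at most one `b`.

If all factors lie in `S ^ κ`, then, as soon as `κ ≤ j + 1`, each block contains an element of `S`
of length at least three periods, from which the block can be recovered. So `S` has at least
`T ^ (1 + α)` words of length at most a constant times `(j + 1) * T`. Since `T ≥ 2 ^ j`, the factor
`j + 1` is negligible, and this is impossible if `p_S(n) = O(n ^ β)` with `β < α`.
-/

section Words

@[simp]
lemma length_wordSeg (x : ℕ → A) (p m : ℕ) : (wordSeg x p m).length = m := by
  simp [wordSeg]

lemma wordSeg_eq_wordSeg_iff {x : ℕ → A} {p q m : ℕ} :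
    wordSeg x p m = wordSeg x q m ↔ ∀ t < m, x (p + t) = x (q + t) := by
  simp [wordSeg, List.map_inj_left]

lemma exists_eq_wordSeg_of_infix {x : ℕ → A} {p m : ℕ} {s : List A}
    (h : s <:+: wordSeg x p m) :
    ∃ r, r + s.length ≤ m ∧ s = wordSeg x (p + r) s.length := by
  obtain ⟨r, hr, hget⟩ := List.infix_iff_getElem?.mp h
  rw [length_wordSeg] at hr
  refine ⟨r, by omega, List.ext_getElem (by simp) fun t ht _ => ?_⟩
  have hletter := hget t ht
  rw [List.getElem?_eq_getElem (by simp; omega), Option.some_inj] at hletter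
  rw [← hletter]
  simp [wordSeg, add_assoc, add_comm t r]

lemma exists_mem_infix_of_mem_powL {S : Set (List A)} {κ : ℕ} (hκ : 1 ≤ κ) {w : List A}
    (hw : w ∈ powL S κ) : ∃ s ∈ S, s <:+: w ∧ w.length ≤ κ * s.length := by
  induction κ, hκ using Nat.le_induction generalizing w with
  | base =>
    obtain ⟨u, rfl : u = [], s, hs, hw⟩ := hw
    exact ⟨s, hs, by simp [hw], by simp [hw]⟩
  | succ κ _ ih =>
    obtain ⟨u, hu, s, hs, rfl⟩ := hw
    obtain ⟨s', hs', hinfix, hlen⟩ := ih hu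
    rcases le_total s.length s'.length with h | h
    · refine ⟨s', hs', hinfix.trans (List.prefix_append u s).isInfix, ?_⟩
      rw [List.length_append]
      nlinarith
    · refine ⟨s, hs, (List.suffix_append u s).isInfix, ?_⟩
      rw [List.length_append]
      nlinarith

lemma complexity_Fac_le_card {x : ℕ → A} {m : ℕ} {W : Finset (List A)}
    (hW : ∀ p, wordSeg x p m ∈ W) : complexity (Fac x) m ≤ W.card := by
  rw [complexity, ← Set.ncard_coe_finset]
  refine Set.ncard_le_ncard ?_ W.finite_toSet
  rintro _ ⟨⟨p, n, rfl⟩, hlen⟩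
  obtain rfl : n = m := by simpa using hlen
  exact hW p

lemma card_le_sum_complexity [Finite A] {ι : Type*} {S : Set (List A)} {I : Finset ι}
    {L : Finset ℕ} {s : ι → List A} (hinj : Set.InjOn s I) (hmem : ∀ i ∈ I, s i ∈ S)
    (hlen : ∀ i ∈ I, (s i).length ∈ L) : I.card ≤ ∑ m ∈ L, complexity S m := by
  classical
  rw [Finset.card_eq_sum_card_fiberwise (f := fun i => (s i).length) hlen]
  refine Finset.sum_le_sum fun m _ => ?_
  rw [complexity, ← Set.ncard_coe_finset]
  refine Set.ncard_le_ncard_of_injOn s ?_ (hinj.mono (by simp +contextual [Set.subset_def]))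
    ((List.finite_length_eq A m).subset fun u hu => hu.2)
  intro i hi
  obtain ⟨hiI, rfl⟩ := Finset.mem_filter.mp hi
  exact ⟨hmem i hiI, rfl⟩

lemma PolyBound.exists_sum_Icc_le {f : ℕ → ℕ} {β γ : ℝ} (hf : PolyBound f β) (hβγ : β ≤ γ)
    (hγ : 0 ≤ γ) : ∃ D : ℝ, ∀ h : ℕ,
      ((∑ m ∈ Finset.Icc 1 h, f m : ℕ) : ℝ) ≤ D * (h : ℝ) ^ (1 + γ) := by
  obtain ⟨C, hC⟩ := hf
  refine ⟨max C 0, fun h => ?_⟩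
  have hterm : ∀ m ∈ Finset.Icc 1 h, (f m : ℝ) ≤ max C 0 * (h : ℝ) ^ γ := by
    intro m hm
    obtain ⟨hm1, hmh⟩ := Finset.mem_Icc.mp hm
    have hm1' : (1 : ℝ) ≤ m := mod_cast hm1
    calc (f m : ℝ) ≤ C * (m : ℝ) ^ β := hC m hm1
      _ ≤ max C 0 * (m : ℝ) ^ γ := by
        gcongr
        exact le_max_left _ _
      _ ≤ max C 0 * (h : ℝ) ^ γ := by gcongr
  calc ((∑ m ∈ Finset.Icc 1 h, f m : ℕ) : ℝ)
      ≤ ∑ _m ∈ Finset.Icc 1 h, max C 0 * (h : ℝ) ^ γ := by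
        push_cast
        exact Finset.sum_le_sum hterm
    _ = max C 0 * (h : ℝ) ^ (1 + γ) := by
      rw [Finset.sum_const, Nat.card_Icc, Nat.add_sub_cancel, nsmul_eq_mul,
        Real.rpow_one_add' (by positivity) (by positivity)]
      ring

lemma ofReal_le_cost {L : Set (List A)} {α : ℝ}
    (hL : ∀ β < α, ∀ κ, 1 ≤ κ → ∀ S : Set (List A),
      PolyBound (complexity S) β → ¬ L ⊆ powL S κ) :
    ENNReal.ofReal α ≤ cost L := by
  refine le_sInf ?_
  rintro _ ⟨β, -, rfl, hdim⟩
  refine ENNReal.ofReal_le_ofReal (le_of_not_gt fun hβ => hdim (sInf_eq_top.mpr ?_))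
  rintro _ ⟨κ, rfl, hκ, S, hS, hsub⟩
  exact absurd hsub (hL β hβ κ hκ S hS)

end Words

lemma eventually_mul_rpow_lt_two_pow_rpow (C s : ℝ) {δ : ℝ} (hδ : 0 < δ) :
    ∀ᶠ j : ℕ in Filter.atTop, C * ((j : ℝ) + 1) ^ s < ((2 : ℝ) ^ j) ^ δ := by
  have hb : 0 < Real.log 2 * δ := by positivity
  have hlittle := ((isLittleO_rpow_exp_pos_mul_atTop s hb).comp_tendsto
    (Filter.tendsto_atTop_add_const_right _ 1 tendsto_natCast_atTop_atTop)).const_mul_left C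
  filter_upwards [hlittle.bound (c := (2 * 2 ^ δ)⁻¹) (by positivity)] with j hj
  have hexp : Real.exp (Real.log 2 * δ * ((j : ℝ) + 1)) = 2 ^ δ * ((2 : ℝ) ^ j) ^ δ := by
    rw [← Real.mul_rpow (by positivity) (by positivity), ← pow_succ', mul_assoc, Real.exp_mul,
      Real.exp_log two_pos, mul_comm, Real.rpow_mul two_pos.le, ← Nat.cast_add_one,
      Real.rpow_natCast]
  simp only [Function.comp_apply, hexp, Real.norm_eq_abs] at hj
  rw [abs_of_pos (a := 2 ^ δ * _) (by positivity)] at hj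
  have h2j : 0 < ((2 : ℝ) ^ j) ^ δ := by positivity
  calc C * ((j : ℝ) + 1) ^ s ≤ (2 * 2 ^ δ)⁻¹ * (2 ^ δ * ((2 : ℝ) ^ j) ^ δ) :=
        (le_abs_self _).trans hj
    _ = ((2 : ℝ) ^ j) ^ δ / 2 := by field_simp
    _ < ((2 : ℝ) ^ j) ^ δ := half_lt_self h2j

lemma eq_of_forall_div_pow_mod_eq {k n i i' : ℕ} (hi : i < n ^ k) (hi' : i' < n ^ k)
    (h : ∀ s < k, i / n ^ s % n = i' / n ^ s % n) : i = i' := by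
  have hdigits : finFunctionFinEquiv.symm ⟨i, hi⟩ = finFunctionFinEquiv.symm ⟨i', hi'⟩ :=
    funext fun s => Fin.ext (h s s.2)
  exact congrArg Fin.val (finFunctionFinEquiv.symm.injective hdigits)

section Pattern

/-- The period `2 * n * (k + 2)` of the patterns of scale `n`: it consists of `k + 2` slots of
length `2 * n`, the last one of which stays empty. -/
def patternPeriod (k n : ℕ) : ℕ := 2 * n * (k + 2)

/-- The offset of the `b` inside slot `s ≤ k` of the `i`-th pattern of scale `n`. The `b` of
slot `0` has offset `0`, and that of slot `s + 1` encodes the digit `s` of `i` in base `n`. -/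
def markOffset (n i : ℕ) : ℕ → ℕ
  | 0 => 0
  | s + 1 => i / n ^ s % n

/-- `IsMarked k n i q` says that the `i`-th pattern of scale `n`, which is a periodic word over
`{a, b}` of period `patternPeriod k n`, has the letter `b` at position `q`. -/
def IsMarked (k n i q : ℕ) : Prop :=
  q / (2 * n) % (k + 2) ≤ k ∧ q % (2 * n) = markOffset n i (q / (2 * n) % (k + 2))

variable {k n i i' q q' r r' s u : ℕ}

lemma patternPeriod_pos (hn : 0 < n) : 0 < patternPeriod k n := by
  unfold patternPeriod
  positivity

lemma four_mul_le_patternPeriod : 4 * n ≤ patternPeriod k n := by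
  unfold patternPeriod
  nlinarith [Nat.zero_le (n * k)]

lemma markOffset_lt (hn : 0 < n) : markOffset n i s < n := by
  cases s with
  | zero => exact hn
  | succ s => exact Nat.mod_lt _ hn

lemma isMarked_congr (h : q ≡ q' [MOD patternPeriod k n]) :
    IsMarked k n i q ↔ IsMarked k n i q' := by
  have hslot : q / (2 * n) % (k + 2) = q' / (2 * n) % (k + 2) := by
    rw [← Nat.mod_mul_right_div_self, ← Nat.mod_mul_right_div_self]
    exact congrArg (· / (2 * n)) h
  have hoffset : q % (2 * n) = q' % (2 * n) := h.of_mul_right (k + 2)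
  rw [IsMarked, IsMarked, hslot, hoffset]

lemma isMarked_slot_add_iff (hs : s ≤ k) (hu : u < 2 * n) :
    IsMarked k n i (2 * n * s + u) ↔ u = markOffset n i s := by
  have hslot : (2 * n * s + u) / (2 * n) % (k + 2) = s := by
    rw [Nat.mul_add_div (by omega), Nat.div_eq_of_lt hu, add_zero, Nat.mod_eq_of_lt (by omega)]
  rw [IsMarked, hslot, Nat.mul_add_mod, Nat.mod_eq_of_lt hu]
  exact and_iff_right hs

lemma isMarked_slot_add_markOffset (hn : 0 < n) (hs : s ≤ k) :
    IsMarked k n i (2 * n * s + markOffset n i s) :=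
  (isMarked_slot_add_iff hs ((markOffset_lt hn).trans_le (by omega))).mpr rfl

lemma IsMarked.mod_lt (hn : 0 < n) (h : IsMarked k n i q) : q % (2 * n) < n :=
  h.2.trans_lt (markOffset_lt hn)

lemma IsMarked.add_lt (hn : 0 < n) (hq : IsMarked k n i q) (hq' : IsMarked k n i' q')
    (hlt : q < q') (hi : q / (2 * n) = q' / (2 * n) → i = i') : q + n < q' := by
  have hdiv := Nat.div_add_mod q (2 * n)
  have hdiv' := Nat.div_add_mod q' (2 * n)
  have hoffset := hq.mod_lt hn
  rcases (Nat.div_le_div_right (c := 2 * n) hlt.le).eq_or_lt with hslot | hslot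
  · obtain rfl := hi hslot
    have : q % (2 * n) = q' % (2 * n) := by rw [hq.2, hq'.2, hslot]
    rw [hslot] at hdiv
    omega
  · have : 2 * n * (q / (2 * n) + 1) ≤ 2 * n * (q' / (2 * n)) := Nat.mul_le_mul_left _ hslot
    rw [mul_add_one] at this
    omega

lemma IsMarked.exists_slot (h : IsMarked k n i q) :
    ∃ s ≤ k, q % patternPeriod k n = 2 * n * s + markOffset n i s := by
  refine ⟨q / (2 * n) % (k + 2), h.1, ?_⟩
  rw [← h.2, patternPeriod, Nat.mod_mul, add_comm]

lemma IsMarked.mod_add_lt (hn : 0 < n) (h : IsMarked k n i q) :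
    q % patternPeriod k n + 3 * n < patternPeriod k n := by
  obtain ⟨s, hs, hq⟩ := h.exists_slot
  have hoffset := markOffset_lt (i := i) (s := s) hn
  have hslot : 2 * n * s ≤ 2 * n * k := Nat.mul_le_mul_left _ hs
  rw [hq]
  unfold patternPeriod
  linarith

lemma isMarked_of_dvd (hn : 0 < n) (h : patternPeriod k n ∣ q) : IsMarked k n i q :=
  (isMarked_congr h.modEq_zero_nat.symm).mp (isMarked_slot_add_markOffset (s := 0) hn (by simp))

lemma not_isMarked_of_dvd_add (hn : 0 < n) (hr : patternPeriod k n ∣ q + u) (hu : 0 < u)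
    (hu' : u ≤ 3 * n) : ¬ IsMarked k n i q := by
  intro h
  have hlt := h.mod_add_lt hn
  have hdvd : patternPeriod k n ∣ q % patternPeriod k n + u :=
    (((Nat.mod_modEq q _).add_right u).dvd_iff dvd_rfl).mpr hr
  have := Nat.le_of_dvd (by omega) hdvd
  omega

/-- The empty slot is what makes the phase of a pattern visible. -/
lemma dvd_of_isMarked_of_forall_not (hn : 0 < n) (hmark : IsMarked k n i (r + 3 * n))
    (hgap : ∀ t < 3 * n, ¬ IsMarked k n i (r + t)) : patternPeriod k n ∣ r + 3 * n := by
  obtain ⟨s, hs, hmod⟩ := hmark.exists_slot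
  cases s with
  | zero => exact Nat.dvd_of_mod_eq_zero hmod
  | succ s =>
    have hoffset := markOffset_lt (i := i) (s := s) hn
    have hoffset' := markOffset_lt (i := i) (s := s + 1) hn
    refine absurd ?_ (hgap (n + markOffset n i s - markOffset n i (s + 1)) (by omega))
    have hphase : r + (n + markOffset n i s - markOffset n i (s + 1)) =
        patternPeriod k n * ((r + 3 * n) / patternPeriod k n) +
          (2 * n * s + markOffset n i s) := by
      have := Nat.div_add_mod (r + 3 * n) (patternPeriod k n)
      rw [hmod, mul_add_one] at this
      omega
    rw [hphase, isMarked_congr (Nat.mul_add_mod _ _ _)]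
    exact isMarked_slot_add_markOffset hn (by omega)

lemma eq_of_forall_markOffset_eq (hi : i < n ^ k) (hi' : i' < n ^ k)
    (h : ∀ s ≤ k, markOffset n i s = markOffset n i' s) : i = i' :=
  eq_of_forall_div_pow_mod_eq hi hi' fun s hs => h (s + 1) hs

lemma eq_of_forall_isMarked_iff (hn : 0 < n) (hi : i < n ^ k) (hi' : i' < n ^ k)
    (h : ∀ q < patternPeriod k n, IsMarked k n i q ↔ IsMarked k n i' q) : i = i' := by
  refine eq_of_forall_markOffset_eq hi hi' fun s hs => ?_
  have hoffset := markOffset_lt (i := i) (s := s) hn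
  have hslot : 2 * n * s ≤ 2 * n * k := Nat.mul_le_mul_left _ hs
  have hlt : 2 * n * s + markOffset n i s < patternPeriod k n := by
    unfold patternPeriod
    linarith
  have hmark := (h _ hlt).mp (isMarked_slot_add_markOffset hn hs)
  exact (isMarked_slot_add_iff hs (by omega)).mp hmark

lemma dvd_of_forall_isMarked_add_iff (hn : 0 < n)
    (h : ∀ t ≤ 3 * n, IsMarked k n i (r + t) ↔ IsMarked k n i' (r' + t))
    (hr : patternPeriod k n ∣ r + 3 * n) : patternPeriod k n ∣ r' + 3 * n := by
  refine dvd_of_isMarked_of_forall_not hn ((h _ le_rfl).mp (isMarked_of_dvd hn hr))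
    fun t ht => (h t ht.le).not.mp ?_
  refine not_isMarked_of_dvd_add (u := 3 * n - t) hn ?_ (by omega) (by omega)
  rwa [add_assoc, Nat.add_sub_cancel' ht.le]

lemma eq_of_forall_isMarked_add_iff (hn : 0 < n) (hi : i < n ^ k) (hi' : i' < n ^ k)
    (h : ∀ t < 3 * patternPeriod k n, IsMarked k n i (r + t) ↔ IsMarked k n i' (r' + t)) :
    i = i' := by
  have hP : 4 * n ≤ patternPeriod k n := four_mul_le_patternPeriod
  have hmod := Nat.mod_lt (r + 3 * n) (patternPeriod_pos (k := k) hn)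
  obtain ⟨t₀, ht₀, hr⟩ :
      ∃ t₀ ≤ patternPeriod k n, patternPeriod k n ∣ r + t₀ + 3 * n := by
    refine ⟨patternPeriod k n - (r + 3 * n) % patternPeriod k n, Nat.sub_le _ _, ?_⟩
    rw [add_right_comm, ← ((Nat.mod_modEq _ _).add_right _).dvd_iff dvd_rfl,
      Nat.add_sub_cancel' hmod.le]
  have hr' : patternPeriod k n ∣ r' + t₀ + 3 * n := by
    refine dvd_of_forall_isMarked_add_iff (i := i) (i' := i') hn (fun t ht => ?_) hr
    simpa only [add_assoc] using h (t₀ + t) (by omega)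
  refine eq_of_forall_isMarked_iff hn hi hi' fun q hq => ?_
  have hq_iff := h (t₀ + 3 * n + q) (by omega)
  rwa [← add_assoc, ← add_assoc, ← add_assoc, ← add_assoc,
    isMarked_congr (hr.modEq_zero_nat.add_right q),
    isMarked_congr (hr'.modEq_zero_nat.add_right q), zero_add] at hq_iff

end Pattern

section Word

/-- The scale of the `j`-th stage of `stageWord k N`, which is also the position where that stage
begins: it consists of `N (scale k N j)` blocks of length `blockLength k N j`. -/
def scale (k : ℕ) (N : ℕ → ℕ) : ℕ → ℕ
  | 0 => 1
  | j + 1 => scale k N j + N (scale k N j) * (3 * (j + 1) * patternPeriod k (scale k N j))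

/-- The length of the blocks of the `j`-th stage of `stageWord k N`. -/
def blockLength (k : ℕ) (N : ℕ → ℕ) (j : ℕ) : ℕ :=
  3 * (j + 1) * patternPeriod k (scale k N j)

open Classical in
/-- The infinite word over `{a, b}`, with `a = false` and `b = true`, whose `j`-th stage is the
concatenation, for `i < N (scale k N j)`, of the prefixes of length `blockLength k N j` of the
`i`-th pattern of scale `scale k N j`. -/
noncomputable def stageWord (k : ℕ) (N : ℕ → ℕ) (p : ℕ) : Bool :=
  decide (∃ j, ∃ q < N (scale k N j) * blockLength k N j, p = scale k N j + q ∧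
    IsMarked k (scale k N j) (q / blockLength k N j) q)

variable {k : ℕ} {N : ℕ → ℕ} {i j m p p' q r : ℕ}

lemma scale_succ : scale k N (j + 1) = scale k N j + N (scale k N j) * blockLength k N j := rfl

lemma scale_mono : Monotone (scale k N) :=
  monotone_nat_of_le_succ fun _ => Nat.le_add_right _ _

lemma scale_pos : 0 < scale k N j :=
  Nat.one_pos.trans_le (scale_mono (Nat.zero_le j))

lemma patternPeriod_dvd_blockLength : patternPeriod k (scale k N j) ∣ blockLength k N j :=
  Dvd.intro_left _ rfl

lemma two_mul_scale_dvd_blockLength : 2 * scale k N j ∣ blockLength k N j :=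
  (Dvd.intro _ rfl).trans patternPeriod_dvd_blockLength

lemma blockLength_pos : 0 < blockLength k N j := by
  have := scale_pos (k := k) (N := N) (j := j)
  unfold blockLength patternPeriod
  positivity

lemma two_pow_le_scale (hN : ∀ n, 0 < n → 0 < N n) (j : ℕ) : 2 ^ j ≤ scale k N j := by
  induction j with
  | zero => rfl
  | succ j ih =>
    have hblock : scale k N j ≤ blockLength k N j :=
      Nat.le_of_dvd blockLength_pos ((Dvd.intro_left 2 rfl).trans two_mul_scale_dvd_blockLength)
    have := hblock.trans (Nat.le_mul_of_pos_left _ (hN (scale k N j) scale_pos))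
    rw [scale_succ, pow_succ]
    omega

lemma exists_scale_le_lt (hN : ∀ n, 0 < n → 0 < N n) (hm : 1 ≤ m) :
    ∃ j, scale k N j ≤ m ∧ m < scale k N (j + 1) := by
  have hunbounded : ¬ BddAbove (Set.range (scale k N)) := by
    rintro ⟨c, hc⟩
    have := (two_pow_le_scale hN c).trans (hc (Set.mem_range_self c))
    exact absurd this Nat.lt_two_pow_self.not_ge
  have hcover := iUnion_Ico_map_succ_eq_Ici (fun j => scale_mono (Nat.zero_le j)) hunbounded
  exact Set.mem_iUnion.mp (hcover.ge (Set.mem_Ici.mpr hm))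

lemma stageWord_eq_true_iff :
    stageWord k N p = true ↔ ∃ j, ∃ q < N (scale k N j) * blockLength k N j,
      p = scale k N j + q ∧ IsMarked k (scale k N j) (q / blockLength k N j) q := by
  simp only [stageWord, decide_eq_true_eq]

lemma le_of_scale_le_add {j' : ℕ} (hq : q < N (scale k N j') * blockLength k N j')
    (h : scale k N j ≤ scale k N j' + q) : j ≤ j' :=
  Nat.le_of_lt_succ (scale_mono.reflect_lt (h.trans_lt (Nat.add_lt_add_left hq _)))

lemma stageWord_scale_add (hq : q < N (scale k N j) * blockLength k N j) :
    stageWord k N (scale k N j + q) = true ↔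
      IsMarked k (scale k N j) (q / blockLength k N j) q := by
  rw [stageWord_eq_true_iff]
  refine ⟨?_, fun h => ⟨j, q, hq, rfl, h⟩⟩
  rintro ⟨j', q', hq', hp, h⟩
  obtain rfl : j' = j :=
    le_antisymm (le_of_scale_le_add hq (hp ▸ Nat.le_add_right _ q'))
      (le_of_scale_le_add hq' (hp ▸ Nat.le_add_right _ q))
  rwa [Nat.add_left_cancel hp]

lemma mul_blockLength_add_lt (hi : i < N (scale k N j)) (hr : r < blockLength k N j) :
    i * blockLength k N j + r < N (scale k N j) * blockLength k N j :=
  calc i * blockLength k N j + r < (i + 1) * blockLength k N j := by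
        rw [add_one_mul]
        omega
    _ ≤ N (scale k N j) * blockLength k N j := Nat.mul_le_mul_right _ hi

lemma stageWord_block (hi : i < N (scale k N j)) (hr : r < blockLength k N j) :
    stageWord k N (scale k N j + (i * blockLength k N j + r)) = true ↔
      IsMarked k (scale k N j) i r := by
  have hdvd : patternPeriod k (scale k N j) ∣ i * blockLength k N j :=
    patternPeriod_dvd_blockLength.mul_left i
  rw [stageWord_scale_add (mul_blockLength_add_lt hi hr), mul_comm i,
    Nat.mul_add_div blockLength_pos, Nat.div_eq_of_lt hr, add_zero, mul_comm _ i,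
    isMarked_congr (hdvd.modEq_zero_nat.add_right r), zero_add]

lemma add_scale_lt_of_isMarked (hq : q < N (scale k N j) * blockLength k N j)
    (h : IsMarked k (scale k N j) i q) :
    q + scale k N j < N (scale k N j) * blockLength k N j := by
  have hoffset := h.mod_lt scale_pos
  obtain ⟨c, hc⟩ : 2 * scale k N j ∣ N (scale k N j) * blockLength k N j :=
    two_mul_scale_dvd_blockLength.mul_left _
  have hslot : q / (2 * scale k N j) < c := Nat.div_lt_of_lt_mul (hc ▸ hq)
  have hmul : 2 * scale k N j * (q / (2 * scale k N j) + 1) ≤ 2 * scale k N j * c :=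
    Nat.mul_le_mul_left _ hslot
  have := Nat.div_add_mod q (2 * scale k N j)
  rw [hc]
  rw [mul_add_one] at hmul
  omega

lemma add_scale_le_of_stageWord (hj : scale k N j ≤ p) (hp : stageWord k N p = true)
    (hp' : stageWord k N p' = true) (hlt : p < p') : p + scale k N j ≤ p' := by
  obtain ⟨j₁, q₁, hq₁, rfl, hmark₁⟩ := stageWord_eq_true_iff.mp hp
  obtain ⟨j₂, q₂, hq₂, rfl, hmark₂⟩ := stageWord_eq_true_iff.mp hp'
  have hscale : scale k N j ≤ scale k N j₁ := scale_mono (le_of_scale_le_add hq₁ hj)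
  rcases (le_of_scale_le_add hq₂ (by omega : scale k N j₁ ≤ _)).eq_or_lt with rfl | hj₁₂
  · have := hmark₁.add_lt scale_pos hmark₂ (by omega) fun hslot => by
      obtain ⟨c, hc⟩ := two_mul_scale_dvd_blockLength (k := k) (N := N) (j := j₁)
      rw [hc, ← Nat.div_div_eq_div_mul, hslot, Nat.div_div_eq_div_mul]
    omega
  · have hnext : scale k N (j₁ + 1) ≤ scale k N j₂ := scale_mono hj₁₂
    have := add_scale_lt_of_isMarked hq₁ hmark₁
    rw [scale_succ] at hnext
    omega

/-- The word of length `m` with the letter `b` at position `o` only; it is `a ^ m` if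
`m ≤ o`. -/
def singleMark (m o : ℕ) : List Bool := (List.range m).map fun t => decide (t = o)

lemma exists_wordSeg_eq_singleMark {x : ℕ → Bool}
    (hx : ∀ t < m, ∀ t' < m, x (p + t) = true → x (p + t') = true → t = t') :
    ∃ o < m + 1, wordSeg x p m = singleMark m o := by
  have hword {o : ℕ} (ho : ∀ t < m, (x (p + t) = true ↔ t = o)) :
      wordSeg x p m = singleMark m o := by
    refine List.map_congr_left fun t ht => ?_
    rw [Bool.eq_iff_iff, ho t (List.mem_range.mp ht), decide_eq_true_iff]
  by_cases hmark : ∃ o < m, x (p + o) = true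
  · obtain ⟨o, ho, hxo⟩ := hmark
    exact ⟨o, by omega, hword fun t ht => ⟨fun hxt => hx t ht o ho hxt hxo, fun h => h ▸ hxo⟩⟩
  · push Not at hmark
    exact ⟨m, by omega, hword fun t ht => ⟨fun hxt => absurd hxt (hmark t ht), by omega⟩⟩

lemma exists_wordSeg_stageWord_eq_singleMark (hp : scale k N j ≤ p) (hm : m ≤ scale k N j) :
    ∃ o < m + 1, wordSeg (stageWord k N) p m = singleMark m o := by
  refine exists_wordSeg_eq_singleMark fun t ht t' ht' hmark hmark' => ?_
  wlog h : t < t' generalizing t t'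
  · rcases (not_lt.mp h).eq_or_lt with h | h
    exacts [h.symm, (this t' ht' t ht hmark' hmark h).symm]
  have := add_scale_le_of_stageWord (j := j) (by omega) hmark hmark' (by omega)
  omega

lemma wordSeg_stageWord_block_mod (hi : i < N (scale k N j)) (hr : r + m ≤ blockLength k N j) :
    wordSeg (stageWord k N) (scale k N j + (i * blockLength k N j + r)) m =
      wordSeg (stageWord k N)
        (scale k N j + (i * blockLength k N j + r % patternPeriod k (scale k N j))) m := by
  refine wordSeg_eq_wordSeg_iff.mpr fun t ht => ?_
  have hmod := Nat.mod_le r (patternPeriod k (scale k N j))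
  rw [Bool.eq_iff_iff, add_assoc, add_assoc, add_assoc, add_assoc, stageWord_block hi (by omega),
    stageWord_block hi (by omega)]
  exact isMarked_congr ((Nat.mod_modEq r _).symm.add_right t)

lemma exists_wordSeg_stageWord_block_eq (hi : i < N (scale k N j)) (hr : r < blockLength k N j) :
    ∃ r' ∈ Finset.range (patternPeriod k (scale k N j)) ∪
        Finset.Ico (blockLength k N j - m) (blockLength k N j),
      wordSeg (stageWord k N) (scale k N j + (i * blockLength k N j + r')) m =
        wordSeg (stageWord k N) (scale k N j + (i * blockLength k N j + r)) m := by
  rcases le_or_gt (r + m) (blockLength k N j) with hinside | houtside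
  · have hmod := Nat.mod_lt r (patternPeriod_pos (k := k) (scale_pos (k := k) (N := N) (j := j)))
    exact ⟨_, Finset.mem_union_left _ (Finset.mem_range.mpr hmod),
      (wordSeg_stageWord_block_mod hi hinside).symm⟩
  · exact ⟨r, Finset.mem_union_right _ (Finset.mem_Ico.mpr ⟨by omega, hr⟩), rfl⟩

/-- A finite set containing all factors of length `m ≤ scale k N (j + 1)` of `stageWord k N`: those
starting before the `j`-th stage, those starting inside it, and those starting after it, which
contain at most one `b`. Inside a block, a factor that fits is determined by its phase. -/
noncomputable def stageFactors (k : ℕ) (N : ℕ → ℕ) (j m : ℕ) : Finset (List Bool) :=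
  (Finset.range (scale k N j)).image (wordSeg (stageWord k N) · m) ∪
    (Finset.range (N (scale k N j)) ×ˢ (Finset.range (patternPeriod k (scale k N j)) ∪
      Finset.Ico (blockLength k N j - m) (blockLength k N j))).image
        (fun o => wordSeg (stageWord k N) (scale k N j + (o.1 * blockLength k N j + o.2)) m) ∪
    (Finset.range (m + 1)).image (singleMark m)

lemma wordSeg_mem_stageFactors (hm : m ≤ scale k N (j + 1)) (p : ℕ) :
    wordSeg (stageWord k N) p m ∈ stageFactors k N j m := by
  rw [stageFactors, Finset.mem_union, Finset.mem_union]
  rcases lt_or_ge p (scale k N j) with hp | hp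
  · exact .inl (.inl (Finset.mem_image_of_mem _ (Finset.mem_range.mpr hp)))
  rcases lt_or_ge p (scale k N (j + 1)) with hp' | hp'
  · obtain ⟨q, rfl⟩ := Nat.exists_eq_add_of_le hp
    have hi : q / blockLength k N j < N (scale k N j) :=
      Nat.div_lt_of_lt_mul (by rw [scale_succ] at hp'; linarith)
    obtain ⟨r, hr, hword⟩ := exists_wordSeg_stageWord_block_eq (m := m) hi
      (Nat.mod_lt q blockLength_pos)
    rw [Nat.div_add_mod'] at hword
    exact .inl (.inr (Finset.mem_image.mpr
      ⟨(_, r), Finset.mem_product.mpr ⟨Finset.mem_range.mpr hi, hr⟩, hword⟩))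
  · obtain ⟨o, ho, hword⟩ := exists_wordSeg_stageWord_eq_singleMark hp' hm
    exact .inr (Finset.mem_image.mpr ⟨o, Finset.mem_range.mpr ho, hword.symm⟩)

lemma card_stageFactors_le :
    (stageFactors k N j m).card ≤
      scale k N j + N (scale k N j) * (patternPeriod k (scale k N j) + m) + (m + 1) := by
  refine (Finset.card_union_le _ _).trans (add_le_add ((Finset.card_union_le _ _).trans
    (add_le_add ?_ ?_)) ?_) <;> refine Finset.card_image_le.trans ?_
  · rw [Finset.card_range]
  · rw [Finset.card_product, Finset.card_range]
    refine Nat.mul_le_mul_left _ ((Finset.card_union_le _ _).trans ?_)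
    rw [Finset.card_range, Nat.card_Ico]
    omega
  · rw [Finset.card_range]

lemma complexity_Fac_stageWord_le (hm : m ≤ scale k N (j + 1)) :
    complexity (Fac (stageWord k N)) m ≤
      scale k N j + N (scale k N j) * (patternPeriod k (scale k N j) + m) + (m + 1) :=
  (complexity_Fac_le_card (wordSeg_mem_stageFactors hm)).trans card_stageFactors_le

lemma eq_of_wordSeg_stageWord_eq {i' r' : ℕ} (hN : N (scale k N j) ≤ scale k N j ^ k)
    (hi : i < N (scale k N j)) (hi' : i' < N (scale k N j))
    (hm : 3 * patternPeriod k (scale k N j) ≤ m) (hr : r + m ≤ blockLength k N j)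
    (hr' : r' + m ≤ blockLength k N j)
    (h : wordSeg (stageWord k N) (scale k N j + (i * blockLength k N j + r)) m =
      wordSeg (stageWord k N) (scale k N j + (i' * blockLength k N j + r')) m) : i = i' := by
  refine eq_of_forall_isMarked_add_iff (r := r) (r' := r') scale_pos (hi.trans_le hN)
    (hi'.trans_le hN) fun t ht => ?_
  have hletter := wordSeg_eq_wordSeg_iff.mp h t (ht.trans_le hm)
  simp only [add_assoc] at hletter
  rw [← stageWord_block hi (by omega), ← stageWord_block hi' (by omega), hletter]

lemma exists_mem_eq_wordSeg_stageWord {κ : ℕ} {S : Set (List Bool)} (hκ : 1 ≤ κ)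
    (hj : κ ≤ j + 1) (hS : Fac (stageWord k N) ⊆ powL S κ) (i : ℕ) :
    ∃ s ∈ S, ∃ r, 3 * patternPeriod k (scale k N j) ≤ s.length ∧
      r + s.length ≤ blockLength k N j ∧
      s = wordSeg (stageWord k N) (scale k N j + (i * blockLength k N j + r)) s.length := by
  obtain ⟨s, hsS, hinfix, hlen⟩ := exists_mem_infix_of_mem_powL hκ
    (hS ⟨scale k N j + i * blockLength k N j, blockLength k N j, rfl⟩)
  obtain ⟨r, hr, hs⟩ := exists_eq_wordSeg_of_infix hinfix
  refine ⟨s, hsS, r, ?_, hr, by rwa [← add_assoc]⟩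
  rw [length_wordSeg] at hlen
  refine Nat.le_of_mul_le_mul_left (?_ : (j + 1) * _ ≤ (j + 1) * _) j.succ_pos
  calc (j + 1) * (3 * patternPeriod k (scale k N j)) = blockLength k N j := by
        unfold blockLength
        ring
    _ ≤ κ * s.length := hlen
    _ ≤ (j + 1) * s.length := Nat.mul_le_mul_right _ hj

lemma le_sum_complexity_of_Fac_stageWord_subset_powL {κ : ℕ} {S : Set (List Bool)}
    (hN : N (scale k N j) ≤ scale k N j ^ k) (hκ : 1 ≤ κ) (hj : κ ≤ j + 1)
    (hS : Fac (stageWord k N) ⊆ powL S κ) :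
    N (scale k N j) ≤ ∑ m ∈ Finset.Icc 1 (blockLength k N j), complexity S m := by
  choose s hsS r hlen hr hs using exists_mem_eq_wordSeg_stageWord hκ hj hS
  have hinj : Set.InjOn s (Finset.range (N (scale k N j))) := by
    intro i hi i' hi' heq
    rw [Finset.mem_coe, Finset.mem_range] at hi hi'
    have hlen_eq : (s i').length = (s i).length := by rw [heq]
    refine eq_of_wordSeg_stageWord_eq hN hi hi' (hlen i) (hr i) (hlen_eq ▸ hr i') ?_
    calc _ = s i := (hs i).symm
      _ = s i' := heq
      _ = _ := by rw [← hlen_eq]; exact hs i'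
  have hperiod : 0 < patternPeriod k (scale k N j) := patternPeriod_pos scale_pos
  calc N (scale k N j) = (Finset.range (N (scale k N j))).card := (Finset.card_range _).symm
    _ ≤ _ := card_le_sum_complexity hinj (fun i _ => hsS i) fun i _ =>
      Finset.mem_Icc.mpr ⟨by have := hlen i; omega, by have := hr i; omega⟩

lemma polyBound_complexity_Fac_stageWord {a : ℝ} (ha : 0 ≤ a) (hN : ∀ n, 0 < n → 0 < N n)
    (hNa : PolyBound N a) : PolyBound (complexity (Fac (stageWord k N))) (1 + a) := by
  obtain ⟨C, hC⟩ := hNa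
  have hC0 : 0 ≤ C := by
    have h1 := hC 1 le_rfl
    rw [Nat.cast_one, Real.one_rpow, mul_one] at h1
    exact (Nat.cast_nonneg _).trans h1
  refine ⟨C * (2 * k + 5) + 3, fun m hm => ?_⟩
  obtain ⟨j, hj, hj'⟩ := exists_scale_le_lt (k := k) hN hm
  have hm' : (1 : ℝ) ≤ m := mod_cast hm
  have hscale : (scale k N j : ℝ) ≤ m := mod_cast hj
  have hcount : (N (scale k N j) : ℝ) ≤ C * (m : ℝ) ^ a :=
    (hC _ scale_pos).trans (by gcongr)
  have hphases : (patternPeriod k (scale k N j) + m : ℝ) ≤ (2 * k + 5) * m := by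
    rw [patternPeriod]
    push_cast
    nlinarith [mul_le_mul_of_nonneg_right hscale (by positivity : (0 : ℝ) ≤ k + 2)]
  have hpow : (m : ℝ) ^ (1 + a) = m * (m : ℝ) ^ a :=
    Real.rpow_one_add' (by positivity) (by positivity)
  have hm_le : (m : ℝ) ≤ (m : ℝ) ^ (1 + a) :=
    hpow ▸ le_mul_of_one_le_right (by positivity) (Real.one_le_rpow hm' ha)
  calc (complexity (Fac (stageWord k N)) m : ℝ)
      ≤ scale k N j + N (scale k N j) * (patternPeriod k (scale k N j) + m) + (m + 1) :=
        mod_cast complexity_Fac_stageWord_le hj'.le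
    _ ≤ m + C * (m : ℝ) ^ a * ((2 * k + 5) * m) + (m + m) := by gcongr
    _ = C * (2 * k + 5) * (m : ℝ) ^ (1 + a) + 3 * m := by rw [hpow]; ring
    _ ≤ C * (2 * k + 5) * (m : ℝ) ^ (1 + a) + 3 * (m : ℝ) ^ (1 + a) := by gcongr
    _ = (C * (2 * k + 5) + 3) * (m : ℝ) ^ (1 + a) := by ring

lemma eventually_mul_blockLength_rpow_lt_scale_rpow {α γ : ℝ} (hγ : γ < α)
    (hN : ∀ n, 0 < n → 0 < N n) (D : ℝ) :
    ∀ᶠ j in Filter.atTop,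
      D * (blockLength k N j : ℝ) ^ (1 + γ) < (scale k N j : ℝ) ^ (1 + α) := by
  filter_upwards [eventually_mul_rpow_lt_two_pow_rpow (D * (6 * ((k : ℝ) + 2)) ^ (1 + γ)) (1 + γ)
    (sub_pos.mpr hγ)] with j hj
  have hscale : (0 : ℝ) < scale k N j := mod_cast scale_pos
  have hblock : (blockLength k N j : ℝ) = 6 * ((k : ℝ) + 2) * (j + 1) * scale k N j := by
    rw [blockLength, patternPeriod]
    push_cast
    ring
  calc D * (blockLength k N j : ℝ) ^ (1 + γ)
      = D * (6 * ((k : ℝ) + 2)) ^ (1 + γ) * ((j : ℝ) + 1) ^ (1 + γ) *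
          (scale k N j : ℝ) ^ (1 + γ) := by
        rw [hblock, Real.mul_rpow (by positivity) hscale.le,
          Real.mul_rpow (by positivity) (by positivity)]
        ring
    _ < ((2 : ℝ) ^ j) ^ (α - γ) * (scale k N j : ℝ) ^ (1 + γ) := by gcongr
    _ ≤ (scale k N j : ℝ) ^ (α - γ) * (scale k N j : ℝ) ^ (1 + γ) := by
      gcongr
      exact_mod_cast two_pow_le_scale hN j
    _ = (scale k N j : ℝ) ^ (1 + α) := by
      rw [← Real.rpow_add hscale]
      ring_nf

lemma not_Fac_stageWord_subset_powL {α β : ℝ} (hα : 0 < α) (hβ : β < α)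
    (hN : ∀ n : ℕ, 0 < n → (n : ℝ) ^ (1 + α) ≤ N n ∧ N n ≤ n ^ k) {κ : ℕ} (hκ : 1 ≤ κ)
    {S : Set (List Bool)} (hSβ : PolyBound (complexity S) β) :
    ¬ Fac (stageWord k N) ⊆ powL S κ := by
  intro hS
  have hNpos (n : ℕ) (hn : 0 < n) : 0 < N n := by
    have : (0 : ℝ) < N n := (by positivity : (0 : ℝ) < (n : ℝ) ^ (1 + α)).trans_le (hN n hn).1
    exact_mod_cast this
  obtain ⟨D, hD⟩ := hSβ.exists_sum_Icc_le (le_max_left β 0) (le_max_right β 0)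
  obtain ⟨j, hlt, hj⟩ := ((eventually_mul_blockLength_rpow_lt_scale_rpow (k := k)
    (max_lt hβ hα) hNpos D).and (Filter.eventually_ge_atTop κ)).exists
  refine hlt.not_ge ?_
  calc (scale k N j : ℝ) ^ (1 + α) ≤ N (scale k N j) := (hN _ scale_pos).1
    _ ≤ (∑ m ∈ Finset.Icc 1 (blockLength k N j), complexity S m : ℕ) :=
      mod_cast le_sum_complexity_of_Fac_stageWord_subset_powL (hN _ scale_pos).2 hκ
        (hj.trans j.le_succ) hS
    _ ≤ D * (blockLength k N j : ℝ) ^ (1 + max β 0) := hD _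

end Word

lemma polyBound_ceil_rpow {a : ℝ} (ha : 0 ≤ a) : PolyBound (fun n => ⌈(n : ℝ) ^ a⌉₊) a := by
  refine ⟨2, fun n hn => ?_⟩
  have hone : 1 ≤ (n : ℝ) ^ a := Real.one_le_rpow (mod_cast hn) ha
  have := Nat.ceil_lt_add_one (zero_le_one.trans hone)
  linarith

lemma ceil_rpow_le_pow_ceil {n : ℕ} (hn : 0 < n) (a : ℝ) : ⌈(n : ℝ) ^ a⌉₊ ≤ n ^ ⌈a⌉₊ := by
  rw [Nat.ceil_le, Nat.cast_pow, ← Real.rpow_natCast]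
  exact Real.rpow_le_rpow_of_exponent_le (mod_cast hn) (Nat.le_ceil a)

theorem stmt19_general (α : ℝ) (h0 : 0 < α) :
    ∃ x : ℕ → Bool,
      PolyBound (complexity (Fac x)) (2 + α) ∧
      ENNReal.ofReal α ≤ cost (Fac x) ∧
      ∀ β : ℝ, β < α → ∀ k : ℕ, 1 ≤ k → ∀ S : Set (List Bool),
        PolyBound (complexity S) β → ¬ Fac x ⊆ powL S k := by
  let N (n : ℕ) : ℕ := ⌈(n : ℝ) ^ (1 + α)⌉₊
  have hNpos (n : ℕ) (hn : 0 < n) : 0 < N n := Nat.ceil_pos.mpr (by positivity)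
  have hN (n : ℕ) (hn : 0 < n) : (n : ℝ) ^ (1 + α) ≤ N n ∧ N n ≤ n ^ ⌈1 + α⌉₊ :=
    ⟨Nat.le_ceil _, ceil_rpow_le_pow_ceil hn _⟩
  have hupper := polyBound_complexity_Fac_stageWord (k := ⌈1 + α⌉₊) (by positivity) hNpos
    (polyBound_ceil_rpow (a := 1 + α) (by positivity))
  have hlower : ∀ β < α, ∀ κ, 1 ≤ κ → ∀ S : Set (List Bool), PolyBound (complexity S) β →
      ¬ Fac (stageWord ⌈1 + α⌉₊ N) ⊆ powL S κ :=
    fun β hβ κ hκ S hS => not_Fac_stageWord_subset_powL h0 hβ hN hκ hS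
  rw [← add_assoc, one_add_one_eq_two] at hupper
  exact ⟨stageWord ⌈1 + α⌉₊ N, hupper, ofReal_le_cost hlower, hlower⟩

/-- for each `0 < α < 1` there is `x ∈ {a,b}^ℕ` with
`p_x(n) = O(n^{2+α})` and `c(x) ≥ α`; equivalently, for every `β < α`, every `k ≥ 1`
and every `S` with `p_S(n) = O(n^β)`, one has `Fac(x) ⊄ S^k`. -/
theorem stmt19 (α : ℝ) (h0 : 0 < α) (h1 : α < 1) :
    ∃ x : ℕ → Bool,
      PolyBound (complexity (Fac x)) (2 + α) ∧
      ENNReal.ofReal α ≤ cost (Fac x) ∧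
      ∀ β : ℝ, β < α → ∀ k : ℕ, 1 ≤ k → ∀ S : Set (List Bool),
        PolyBound (complexity S) β → ¬ Fac x ⊆ powL S k :=
  stmt19_general α h0
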